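/- Let f : V → ℝ with ∫_V f dμ > 0 and let p be a nonnegative integer. Then there exists Λ₀ > 0 such that for every λ > Λ₀ the functional J_λ has a local minimum point u_λ (with respect to the sup norm on functions V → ℝ); in particular u_λ solves Δu(x) = λ·e^{u(x)}·(e^{u(x)} − 1)^{2p+1} + f(x) for all x ∈ V, and moreover ln(1/2) < u_λ(x) for all x ∈ V. -/

import Mathlib

/-!
The potential `(e^u - 1)^{2p+2}` vanishes at `u = 0` and is at least `(1/4)^{p+1}` wherever
`|u| = log 2`. Hence `J_λ(0) = 0`, while on the sphere `‖u‖ = log 2` of the sup norm the potential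
term is at least `λ/(2p+2) · (min μ) · (1/4)^{p+1}`, the Dirichlet term is nonnegative and the linear
term is at least `-log 2 · ∫ |f| dμ`. So for large `λ` the functional is positive on the sphere
(`Jfun_pos_of_abs_eq`), and its minimum over the compact ball `‖u‖ ≤ log 2` is attained in the open
ball. There it is a local minimum with `u > -log 2 = log (1/2)`, and the equation is the
Euler–Lagrange equation, read off from the directional derivatives (`hasDerivAt_Jfun`) in the
coordinate directions.
-/

open Real

/-- Graph Laplacian: `Δu(x) = (1/μ(x)) Σ_y w x y (u y − u x)`. -/
noncomputable def glap {V : Type*} [Fintype V] (w : V → V → ℝ) (μ : V → ℝ)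
    (u : V → ℝ) (x : V) : ℝ :=
  (1 / μ x) * ∑ y, w x y * (u y - u x)

/-- Integral over the graph: `∫_V g dμ = Σ_x μ(x) g(x)`. -/
noncomputable def gint {V : Type*} [Fintype V] (μ : V → ℝ) (g : V → ℝ) : ℝ :=
  ∑ x, μ x * g x

/-- Gradient norm squared: `|∇u|²(x) = (1/(2μ(x))) Σ_y w x y (u y − u x)²`. -/
noncomputable def gradsq {V : Type*} [Fintype V] (w : V → V → ℝ) (μ : V → ℝ)
    (u : V → ℝ) (x : V) : ℝ :=
  (1 / (2 * μ x)) * ∑ y, w x y * (u y - u x) ^ 2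

/-- The functional `J_λ(u) = (1/2)∫|∇u|² + (λ/(2p+2))∫(e^u−1)^{2p+2} + ∫ f u dμ`. -/
noncomputable def Jfun {V : Type*} [Fintype V] (w : V → V → ℝ) (μ : V → ℝ)
    (p : ℕ) (lam : ℝ) (f : V → ℝ) (u : V → ℝ) : ℝ :=
  (1 / 2) * gint μ (gradsq w μ u)
    + (lam / (2 * p + 2)) * gint μ (fun x => (Real.exp (u x) - 1) ^ (2 * p + 2))
    + gint μ (fun x => f x * u x)

section

variable {V : Type*} [Fintype V]

lemma gint_gradsq {w : V → V → ℝ} {μ : V → ℝ} (hμ : ∀ x, 0 < μ x) (u : V → ℝ) :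
    gint μ (gradsq w μ u) = ∑ x, ∑ y, (1 / 2) * (w x y * (u y - u x) ^ 2) := by
  unfold gint gradsq
  refine Finset.sum_congr rfl fun x _ => ?_
  rw [← Finset.mul_sum]
  have := (hμ x).ne'
  field_simp

/-- Green's formula on the graph: the weak form of `-Δu` tested against `v`. -/
lemma green {w : V → V → ℝ} {μ : V → ℝ} (hsymm : ∀ x y, w x y = w y x)
    (hμ : ∀ x, 0 < μ x) (u v : V → ℝ) :
    (1 / 2) * ∑ x, ∑ y, w x y * (u y - u x) * (v y - v x)
      = -∑ x, μ x * (glap w μ u x * v x) := by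
  have h1 : ∑ x, ∑ y, w x y * (u y - u x) * v y
      = -∑ x, ∑ y, w x y * (u y - u x) * v x := by
    rw [Finset.sum_comm, ← Finset.sum_neg_distrib]
    refine Finset.sum_congr rfl fun x _ => ?_
    rw [← Finset.sum_neg_distrib]
    refine Finset.sum_congr rfl fun y _ => ?_
    rw [hsymm y x]; ring
  have h2 : ∑ x, μ x * (glap w μ u x * v x)
      = ∑ x, ∑ y, w x y * (u y - u x) * v x := by
    refine Finset.sum_congr rfl fun x _ => ?_
    rw [← Finset.sum_mul, glap]
    have := (hμ x).ne'
    field_simp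
  simp only [mul_sub (_ * _) (v _) (v _), Finset.sum_sub_distrib]
  rw [h1, h2]; ring

/-- The first variation of `J_λ` at `u` in the direction `v`. -/
lemma hasDerivAt_Jfun {w : V → V → ℝ} {μ : V → ℝ} (hsymm : ∀ x y, w x y = w y x)
    (hμ : ∀ x, 0 < μ x) (p : ℕ) (lam : ℝ) (f u v : V → ℝ) :
    HasDerivAt (fun t : ℝ => Jfun w μ p lam f (u + t • v))
      (∑ x, μ x * ((-glap w μ u x
        + lam * Real.exp (u x) * (Real.exp (u x) - 1) ^ (2 * p + 1) + f x) * v x)) 0 := by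
  have hl : ∀ x, HasDerivAt (fun t : ℝ => u x + t * v x) (v x) 0 := fun x => by
    simpa using ((hasDerivAt_id (0 : ℝ)).mul_const (v x)).const_add (u x)
  have hA : HasDerivAt (fun t : ℝ => ∑ x, ∑ y,
      (1 / 2) * (w x y * ((u y + t * v y) - (u x + t * v x)) ^ 2))
      (∑ x, ∑ y, w x y * (u y - u x) * (v y - v x)) 0 := by
    refine HasDerivAt.fun_sum fun x _ => HasDerivAt.fun_sum fun y _ => ?_
    refine (((((hl y).fun_sub (hl x)).fun_pow 2).const_mul (w x y)).const_mul
      (1 / 2)).congr_deriv ?_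
    simp; ring
  have hB : HasDerivAt (fun t : ℝ => ∑ x, μ x * (Real.exp (u x + t * v x) - 1) ^ (2 * p + 2))
      (∑ x, μ x * ((2 * p + 2) * (Real.exp (u x) - 1) ^ (2 * p + 1)
        * (Real.exp (u x) * v x))) 0 := by
    refine HasDerivAt.fun_sum fun x _ => ?_
    refine ((((hl x).exp.sub_const 1).fun_pow (2 * p + 2)).const_mul (μ x)).congr_deriv ?_
    simp
  have hC : HasDerivAt (fun t : ℝ => ∑ x, μ x * (f x * (u x + t * v x)))
      (∑ x, μ x * (f x * v x)) 0 :=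
    HasDerivAt.fun_sum fun x _ => ((hl x).const_mul (f x)).const_mul (μ x)
  have hJ : (fun t : ℝ => Jfun w μ p lam f (u + t • v)) = fun t : ℝ =>
      (1 / 2) * (∑ x, ∑ y, (1 / 2) * (w x y * ((u y + t * v y) - (u x + t * v x)) ^ 2))
      + (lam / (2 * p + 2)) * (∑ x, μ x * (Real.exp (u x + t * v x) - 1) ^ (2 * p + 2))
      + ∑ x, μ x * (f x * (u x + t * v x)) := by
    funext t
    rw [Jfun, gint_gradsq hμ]
    simp [gint]
  rw [hJ]
  refine (((hA.const_mul (1 / 2)).add (hB.const_mul (lam / (2 * p + 2)))).add hC).congr_deriv ?_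
  rw [green hsymm hμ, Finset.mul_sum, ← Finset.sum_neg_distrib, ← Finset.sum_add_distrib,
    ← Finset.sum_add_distrib]
  refine Finset.sum_congr rfl fun x _ => ?_
  have : (2 * (p : ℝ) + 2) ≠ 0 := by positivity
  field_simp

/-- The Euler–Lagrange equation at a local minimum of `J_λ`. -/
lemma eulerLagrange {w : V → V → ℝ} {μ : V → ℝ} (hsymm : ∀ x y, w x y = w y x)
    (hμ : ∀ x, 0 < μ x) {p : ℕ} {lam : ℝ} {f u : V → ℝ}
    (hu : IsLocalMin (Jfun w μ p lam f) u) (x : V) :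
    glap w μ u x
      = lam * Real.exp (u x) * (Real.exp (u x) - 1) ^ (2 * p + 1) + f x := by
  classical
  have hc : Continuous fun t : ℝ => u + t • (Pi.single x (1 : ℝ) : V → ℝ) := by fun_prop
  have hmin : IsLocalMin
      (fun t : ℝ => Jfun w μ p lam f (u + t • (Pi.single x (1 : ℝ) : V → ℝ))) 0 := by
    have ht := hc.tendsto 0
    rw [zero_smul, add_zero] at ht
    filter_upwards [ht.eventually hu] with t h
    simpa using h
  have h0 := hmin.hasDerivAt_eq_zero
    (hasDerivAt_Jfun hsymm hμ p lam f u (Pi.single x 1))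
  rw [Finset.sum_eq_single x (fun y _ hy => by simp [Pi.single_eq_of_ne hy]) (by simp)] at h0
  have := (mul_eq_zero.mp h0).resolve_left (hμ x).ne'
  rw [Pi.single_eq_same] at this
  linarith

lemma quarter_le_sq_exp_sub_one {t : ℝ} (ht : |t| = Real.log 2) :
    1 / 4 ≤ (Real.exp t - 1) ^ 2 := by
  rcases abs_eq (Real.log_nonneg one_le_two) |>.mp ht with h | h
  · rw [h, Real.exp_log two_pos]; norm_num
  · rw [h, Real.exp_neg, Real.exp_log two_pos]; norm_num

/-- On the sphere `‖u‖ = log 2` the potential term dominates the linear term once `λ` is large. -/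
lemma Jfun_pos_of_abs_eq {w : V → V → ℝ} {μ : V → ℝ} (hnonneg : ∀ x y, 0 ≤ w x y)
    (hμ : ∀ x, 0 < μ x) {p : ℕ} {lam m : ℝ} {f u : V → ℝ} (hlam : 0 < lam)
    (hm : ∀ x, m ≤ μ x)
    (hbig : Real.log 2 * (∑ x, μ x * |f x|) < lam / (2 * p + 2) * (m * (1 / 4) ^ (p + 1)))
    (hu : ∀ x, |u x| ≤ Real.log 2) {x : V} (hx : |u x| = Real.log 2) :
    0 < Jfun w μ p lam f u := by
  have hA : 0 ≤ gint μ (gradsq w μ u) := by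
    rw [gint_gradsq hμ]
    exact Finset.sum_nonneg fun x _ => Finset.sum_nonneg fun y _ => by
      have := hnonneg x y
      positivity
  have hB : m * (1 / 4) ^ (p + 1)
      ≤ gint μ (fun x => (Real.exp (u x) - 1) ^ (2 * p + 2)) := by
    have hterm : ∀ y, 0 ≤ μ y * (Real.exp (u y) - 1) ^ (2 * p + 2) := fun y =>
      mul_nonneg (hμ y).le (Even.pow_nonneg ⟨p + 1, by ring⟩ _)
    refine le_trans ?_ (Finset.single_le_sum (fun y _ => hterm y) (Finset.mem_univ x))
    have hq : (1 / 4 : ℝ) ^ (p + 1) ≤ (Real.exp (u x) - 1) ^ (2 * p + 2) := by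
      rw [show 2 * p + 2 = 2 * (p + 1) by ring, pow_mul]
      exact pow_le_pow_left₀ (by norm_num) (quarter_le_sq_exp_sub_one hx) _
    exact mul_le_mul (hm x) hq (by positivity) (hμ x).le
  have hC : -(Real.log 2 * (∑ x, μ x * |f x|)) ≤ gint μ (fun x => f x * u x) := by
    rw [Finset.mul_sum, ← Finset.sum_neg_distrib]
    refine Finset.sum_le_sum fun y _ => ?_
    have h1 : |f y * u y| ≤ |f y| * Real.log 2 := by
      rw [abs_mul]; exact mul_le_mul_of_nonneg_left (hu y) (abs_nonneg _)
    have h2 := neg_le_of_abs_le h1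
    nlinarith [hμ y]
  have hB' := mul_le_mul_of_nonneg_left hB
    (show 0 ≤ lam / (2 * (p : ℝ) + 2) by positivity)
  unfold Jfun
  linarith

end

theorem stmt_14 {V : Type*} [Fintype V] [Nonempty V]
    (w : V → V → ℝ) (μ : V → ℝ)
    (hsymm : ∀ x y, w x y = w y x) (hnonneg : ∀ x y, 0 ≤ w x y)
    (hμ : ∀ x, 0 < μ x)
    (hconn : (SimpleGraph.fromRel (fun x y => 0 < w x y)).Connected)
    (p : ℕ) (f : V → ℝ) (hf : 0 < gint μ f) :
    ∃ Λ₀ > (0 : ℝ), ∀ lam : ℝ, Λ₀ < lam →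
      ∃ ulam : V → ℝ,
        IsLocalMin (Jfun w μ p lam f) ulam
        ∧ (∀ x, glap w μ ulam x
            = lam * Real.exp (ulam x) * (Real.exp (ulam x) - 1) ^ (2 * p + 1) + f x)
        ∧ (∀ x, Real.log (1 / 2) < ulam x) := by
  have hr : 0 < Real.log 2 := Real.log_pos one_lt_two
  obtain ⟨x₀, hx₀⟩ := Finite.exists_min μ
  set M := ∑ x, μ x * |f x| with hM
  have hM0 : 0 ≤ M := Finset.sum_nonneg fun x _ => mul_nonneg (hμ x).le (abs_nonneg _)
  have hc : 0 < μ x₀ * (1 / 4 : ℝ) ^ (p + 1) := mul_pos (hμ x₀) (by positivity)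
  have hp : 0 < 2 * (p : ℝ) + 2 := by positivity
  -- `Λ₀` exceeds by one the value of `lam` at which the bounds on the two terms balance.
  refine ⟨Real.log 2 * M * (2 * p + 2) / (μ x₀ * (1 / 4) ^ (p + 1)) + 1, by positivity,
    fun lam hlam => ?_⟩
  have hlam0 : 0 < lam := lt_trans (by positivity) hlam
  have hbig : Real.log 2 * M < lam / (2 * p + 2) * (μ x₀ * (1 / 4) ^ (p + 1)) := by
    have h : Real.log 2 * M * (2 * p + 2) / (μ x₀ * (1 / 4) ^ (p + 1)) < lam := by linarith
    rw [div_lt_iff₀ hc] at h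
    rw [div_mul_eq_mul_div, lt_div_iff₀ hp]
    exact h
  have hcont : Continuous (Jfun w μ p lam f) := by
    unfold Jfun gint gradsq
    fun_prop
  obtain ⟨u, hu, hmin⟩ := (isCompact_closedBall (0 : V → ℝ) (Real.log 2)).exists_isMinOn
    ⟨0, Metric.mem_closedBall_self hr.le⟩ hcont.continuousOn
  have hJ0 : Jfun w μ p lam f 0 = 0 := by simp [Jfun, gint, gradsq]
  have hule : ∀ x, |u x| ≤ Real.log 2 := by
    rw [mem_closedBall_zero_iff, pi_norm_le_iff_of_nonneg hr.le] at hu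
    exact hu
  have hult : ∀ x, |u x| < Real.log 2 := fun x => by
    refine lt_of_le_of_ne (hule x) fun hx => ?_
    have h1 := Jfun_pos_of_abs_eq hnonneg hμ hlam0 hx₀ hbig hule hx
    have h2 : Jfun w μ p lam f u ≤ Jfun w μ p lam f 0 := hmin (Metric.mem_closedBall_self hr.le)
    linarith
  have hball : u ∈ Metric.ball (0 : V → ℝ) (Real.log 2) := by
    rw [mem_ball_zero_iff, pi_norm_lt_iff hr]
    exact hult
  have hloc : IsLocalMin (Jfun w μ p lam f) u :=
    hmin.isLocalMin (Filter.mem_of_superset (Metric.isOpen_ball.mem_nhds hball)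
      Metric.ball_subset_closedBall)
  refine ⟨u, hloc, eulerLagrange hsymm hμ hloc, fun x => ?_⟩
  rw [one_div, Real.log_inv]
  exact (abs_lt.mp (hult x)).1
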